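/- Let β ≥ 1 be a real number. There exist constants C_β > 0 and C > 0, depending only on β, with the following property. For all ℓ₁ ≥ ℓ₃ > 0, every r ∈ ℝ³, every integer M ≥ 0, and every configuration (x₁, …, x_M) ∈ (ℝ³)^M, one has M_r^{(ℓ₁)} · 1(M_r^{(ℓ₁)} ≥ C_β (ℓ₁/ℓ₃)³) ≤ C ∑_{s ∈ ℓ₃ℤ³} M_{r,s}^{(ℓ₁,ℓ₃)} · 1(M_{r,s}^{(ℓ₁,ℓ₃)} ≥ β), where M_{r,s}^{(ℓ₁,ℓ₃)} := #{i : x_i ∈ Λ_r^{(ℓ₁)} ∩ Λ_s^{(ℓ₃)}}. -/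

import Mathlib

noncomputable section

local notation "E3" => EuclideanSpace ℝ (Fin 3)

/-- The number of points of the configuration `x` lying in the half-open cube of side
length `ℓ` centred at the point with coordinates `c`. -/
def boxCount {M : ℕ} (x : Fin M → E3) (c : Fin 3 → ℝ) (ℓ : ℝ) : ℕ :=
  Set.ncard {i : Fin M | ∀ d : Fin 3, -(ℓ / 2) ≤ x i d - c d ∧ x i d - c d < ℓ / 2}

/-- The number of points of the configuration `x` lying both in the cube of side `ℓ`
centred at `c` and in the cube of side `ℓ'` centred at `c'`. -/
def interBoxCount {M : ℕ} (x : Fin M → E3) (c : Fin 3 → ℝ) (ℓ : ℝ)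
    (c' : Fin 3 → ℝ) (ℓ' : ℝ) : ℕ :=
  Set.ncard {i : Fin M |
    (∀ d : Fin 3, -(ℓ / 2) ≤ x i d - c d ∧ x i d - c d < ℓ / 2) ∧
    (∀ d : Fin 3, -(ℓ' / 2) ≤ x i d - c' d ∧ x i d - c' d < ℓ' / 2)}

/-!
Partition the points of the large box according to the cell of the lattice `ℓ₃ℤ³` they lie in: at
most `(3 ℓ₁ / ℓ₃) ^ 3` cells occur. The cells with fewer than `β` points carry together at most
`(3 ℓ₁ / ℓ₃) ^ 3 * β` points, so once the box holds twice that many, at least half of its points lie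
in cells with at least `β` points.
-/

section Fibers

variable {α κ : Type*} {S : Set α}

theorem ncard_eq_sum_ncard_fibers {t : Finset κ} {g : α → κ} (hS : S.Finite)
    (hg : Set.MapsTo g S t) : S.ncard = ∑ k ∈ t, (S ∩ g ⁻¹' {k}).ncard := by
  classical
  lift S to Finset α using hS
  have fiber_eq (k : κ) : ↑S ∩ g ⁻¹' {k} = ({i ∈ S | g i = k} : Finset α) := by ext; simp
  simp only [fiber_eq, Set.ncard_coe_finset]
  exact Finset.card_eq_sum_card_fiberwise hg

theorem ncard_le_tsum_large_fibers_add (hS : S.Finite) (g : α → κ) (β : ℝ) :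
    (S.ncard : ℝ) ≤
      (∑' k, ((S ∩ g ⁻¹' {k}).ncard : ℝ) * if β ≤ (S ∩ g ⁻¹' {k}).ncard then 1 else 0) +
        (g '' S).ncard * β⁺ := by
  obtain ⟨t, ht⟩ := (hS.image g).exists_finset_coe
  have fiber_empty (k : κ) (hk : k ∉ t) : S ∩ g ⁻¹' {k} = ∅ := by
    rw [Set.eq_empty_iff_forall_notMem]
    rintro i ⟨hi, rfl⟩
    exact hk (Finset.mem_coe.mp (ht ▸ Set.mem_image_of_mem g hi))
  have fiber_le (m : ℝ) : m ≤ m * (if β ≤ m then 1 else 0) + β⁺ := by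
    split_ifs with h
    · linarith [posPart_nonneg β]
    · linarith [le_posPart β]
  rw [tsum_eq_sum fun k hk => by simp [fiber_empty k hk], ← ht, Set.ncard_coe_finset,
    ncard_eq_sum_ncard_fibers hS (ht ▸ Set.mapsTo_image g S), Nat.cast_sum, ← nsmul_eq_mul,
    ← Finset.sum_const, ← Finset.sum_add_distrib]
  exact Finset.sum_le_sum fun k _ => fiber_le _

end Fibers

section Round

variable {K : Type*} [Field K] [LinearOrder K] [IsStrictOrderedRing K] [FloorRing K]

theorem round_monotone : Monotone (round : K → ℤ) := fun a b hab => by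
  rw [round_eq, round_eq]
  gcongr

theorem card_Icc_round_le {a b : K} (hab : a ≤ b) :
    ((Finset.Icc (round a) (round b)).card : K) ≤ b - a + 2 := by
  have card_eq : ((Finset.Icc (round a) (round b)).card : K) = round b + 1 - round a := by
    exact_mod_cast Int.card_Icc_of_le _ _ (by linarith [round_monotone hab])
  linarith [round_le_add_half b, sub_half_lt_round a]

end Round

section Cube

variable {ι : Type*} {r : ι → ℝ} {L ℓ : ℝ}

/-- The half-open cube `Λ_c^{(ℓ)}` of side `ℓ` centred at `c`, in arbitrary dimension. The
inequalities are those of `boxCount`, so that `boxCount x c ℓ` unfolds to the cardinality of a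
preimage of `cube c ℓ`. -/
def cube (c : ι → ℝ) (ℓ : ℝ) : Set (ι → ℝ) :=
  {y | ∀ d, -(ℓ / 2) ≤ y d - c d ∧ y d - c d < ℓ / 2}

/-- The index `s` of the cell of the partition of space into the cubes of side `ℓ` centred at
`ℓ s`, `s` an integer vector, that contains `y`. -/
def cellIndex (ℓ : ℝ) (y : ι → ℝ) : ι → ℤ := fun d => round (y d / ℓ)

theorem cellIndex_preimage_singleton (hℓ : 0 < ℓ) (s : ι → ℤ) :
    cellIndex ℓ ⁻¹' {s} = cube (fun d => ℓ * s d) ℓ := by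
  ext y
  refine funext_iff.trans (forall_congr' fun d => ?_)
  rw [cellIndex, round_eq_iff, Set.mem_Ico, le_div_iff₀ hℓ, div_lt_iff₀ hℓ]
  constructor <;> rintro ⟨hlower, hupper⟩ <;> constructor <;> linarith

theorem cellIndex_monotone (hℓ : 0 ≤ ℓ) : Monotone (cellIndex ℓ : (ι → ℝ) → ι → ℤ) :=
  fun _ _ hyz d => round_monotone (div_le_div_of_nonneg_right (hyz d) hℓ)

theorem cube_subset_Icc (c : ι → ℝ) (ℓ : ℝ) :
    cube c ℓ ⊆ Set.Icc (fun d => c d - ℓ / 2) (fun d => c d + ℓ / 2) :=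
  fun _ hy => ⟨fun d => by linarith [(hy d).1], fun d => by linarith [(hy d).2]⟩

theorem ncard_cellIndex_image_le [Fintype ι] {A : Set (ι → ℝ)} (hℓ : 0 < ℓ) (hL : ℓ ≤ L)
    (hA : A ⊆ cube r L) :
    ((cellIndex ℓ '' A).ncard : ℝ) ≤ (3 * (L / ℓ)) ^ Fintype.card ι := by
  classical
  let a : ι → ℝ := fun d => r d - L / 2
  let b : ι → ℝ := fun d => r d + L / 2
  have image_subset : cellIndex ℓ '' A ⊆ Finset.Icc (cellIndex ℓ a) (cellIndex ℓ b) := by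
    rw [Finset.coe_Icc]
    exact (Set.image_mono (hA.trans (cube_subset_Icc r L))).trans
      (cellIndex_monotone hℓ.le).image_Icc_subset
  have side_le (d : ι) :
      ((Finset.Icc (cellIndex ℓ a d) (cellIndex ℓ b d)).card : ℝ) ≤ 3 * (L / ℓ) := by
    have hab : a d / ℓ ≤ b d / ℓ := by gcongr; simp only [a, b]; linarith
    have length_eq : b d / ℓ - a d / ℓ = L / ℓ := by simp only [a, b]; ring
    have one_le : 1 ≤ L / ℓ := (one_le_div hℓ).mpr hL
    calc ((Finset.Icc (cellIndex ℓ a d) (cellIndex ℓ b d)).card : ℝ)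
        ≤ b d / ℓ - a d / ℓ + 2 := card_Icc_round_le hab
      _ ≤ 3 * (L / ℓ) := by linarith
  calc ((cellIndex ℓ '' A).ncard : ℝ)
      ≤ (Finset.Icc (cellIndex ℓ a) (cellIndex ℓ b)).card := by
        rw [← Set.ncard_coe_finset]
        exact_mod_cast Set.ncard_le_ncard image_subset
    _ = ∏ d, ((Finset.Icc (cellIndex ℓ a d) (cellIndex ℓ b d)).card : ℝ) := by
        rw [Pi.card_Icc, Nat.cast_prod]
    _ ≤ (3 * (L / ℓ)) ^ Fintype.card ι := by
        rw [← Finset.card_univ, ← Finset.prod_const]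
        exact Finset.prod_le_prod (fun _ _ => Nat.cast_nonneg _) fun d _ => side_le d

end Cube

theorem occupied_box_controlled_by_small_boxes_general {ι α : Type*} [Fintype ι] (β : ℝ)
    {ℓ₁ ℓ₃ : ℝ} (h₃ : 0 < ℓ₃) (h₁ : ℓ₃ ≤ ℓ₁) {r : ι → ℝ} {x : α → ι → ℝ}
    (hx : (x ⁻¹' cube r ℓ₁).Finite) :
    ((x ⁻¹' cube r ℓ₁).ncard : ℝ) *
        (if 2 * 3 ^ Fintype.card ι * β⁺ * (ℓ₁ / ℓ₃) ^ Fintype.card ι ≤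
          ((x ⁻¹' cube r ℓ₁).ncard : ℝ) then 1 else 0)
      ≤ 2 * ∑' s : ι → ℤ,
          ((x ⁻¹' cube r ℓ₁ ∩ x ⁻¹' cube (fun d => ℓ₃ * s d) ℓ₃).ncard : ℝ) *
            (if β ≤ ((x ⁻¹' cube r ℓ₁ ∩ x ⁻¹' cube (fun d => ℓ₃ * s d) ℓ₃).ncard : ℝ)
              then 1 else 0) := by
  have points_le := ncard_le_tsum_large_fibers_add hx (cellIndex ℓ₃ ∘ x) β
  have cells_le : ((cellIndex ℓ₃ ∘ x '' (x ⁻¹' cube r ℓ₁)).ncard : ℝ) ≤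
      3 ^ Fintype.card ι * (ℓ₁ / ℓ₃) ^ Fintype.card ι := by
    rw [Set.image_comp, ← mul_pow]
    exact ncard_cellIndex_image_le h₃ h₁ (Set.image_preimage_subset x _)
  have small_le := mul_le_mul_of_nonneg_right cells_le (posPart_nonneg β)
  simp only [Set.preimage_comp, cellIndex_preimage_singleton h₃] at points_le
  split_ifs with many_points
  · linarith
  · rw [mul_zero]
    exact mul_nonneg zero_le_two (tsum_nonneg fun s => by positivity)

/-- If a box of side `ℓ₁` contains at least `Cβ (ℓ₁/ℓ₃)³` points, then its occupation
number is controlled by the occupation numbers of those sub-boxes of side `ℓ₃`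
containing at least `β` points. -/
theorem occupied_box_controlled_by_small_boxes (β : ℝ) (hβ : 1 ≤ β) :
    ∃ Cβ > 0, ∃ C > 0, ∀ ℓ₁ ℓ₃ : ℝ, 0 < ℓ₃ → ℓ₃ ≤ ℓ₁ →
      ∀ (r : Fin 3 → ℝ) (M : ℕ) (x : Fin M → E3),
      (boxCount x r ℓ₁ : ℝ) *
          (if Cβ * (ℓ₁ / ℓ₃) ^ 3 ≤ (boxCount x r ℓ₁ : ℝ) then 1 else 0)
      ≤ C * ∑' s : Fin 3 → ℤ,
          (interBoxCount x r ℓ₁ (fun d => ℓ₃ * s d) ℓ₃ : ℝ) *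
            (if β ≤ (interBoxCount x r ℓ₁ (fun d => ℓ₃ * s d) ℓ₃ : ℝ) then 1 else 0) := by
  exact ⟨2 * 3 ^ 3 * β⁺, by simpa using zero_lt_one.trans_le hβ, 2, two_pos, fun _ _ h₃ h₁ _ _ x =>
    occupied_box_controlled_by_small_boxes_general (x := fun i => x i) β h₃ h₁ (Set.toFinite _)⟩
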